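/- Let E be a Fréchet space whose topology is generated by an increasing sequence of seminorms (‖·‖_k), let ℓ and ℓ̃ be Banach sequence spaces with monotone norm, and let B = (b_n^k), C = (c_n^k) be Köthe matrices (no nuclearity assumed). If (E, λ^ℓ(B), λ^{ℓ̃}(C)) ∈ 𝓑𝓕, then for every function N : ℕ → ℕ there exists N₀ ∈ ℕ such that for each r ∈ ℕ there exist k₀ ∈ ℕ and C₀ > 0 with c_j^r · ‖u‖*_{N₀} ≤ C₀ · (max_{1 ≤ k ≤ k₀} ‖u‖*_{N(k)} · b_i^k) · (max_{1 ≤ k ≤ k₀} c_j^k / b_i^{N(k)}) for all i ∈ ℕ, j ∈ ℕ and all u ∈ E′. -/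

import Mathlib

/-!
For fixed `N`, the operators `S : E → λ^ℓ(B)` with `‖S‖_{k, N k} < ∞` and `R : λ^ℓ(B) → λ^ℓ̃(C)` with
`‖R‖_{k, N k} < ∞` form Fréchet spaces, and the inequality is what the Baire category theorem,
applied to the bilinear map `(S, R) ↦ R ∘ S`, says about the rank-one operators `S = u ⊗ e_i` and
`R = e_i' ⊗ e_j`. The proof carries this out on a compact parameter space instead.

After replacing `N` by its running maximum, suppose the inequality fails: for every `N₀` there is
`r = ρ N₀` for which no `k₀, C₀` work. Let `ν : ℕ → ℕ` take every value infinitely often. Rescaling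
the counterexamples for `N₀ = ν n`, `k₀ = n + 1`, `C₀ = (n + 1) 4ⁿ` (`normalise`) gives `f n ∈ E'`
and `t n > 0` such that `f n ⊗ e_{I n}` and `t n e_{I n}' ⊗ e_{J n}` have `(k, N k)`-norms at most
`2⁻ⁿ` for `1 ≤ k ≤ n + 1`, while their composition has `(ρ (ν n), ν n)`-norm larger than `n`.
Hence for all `σ, τ : ℕ → Bool` the sums `S σ` and `R τ` of the terms switched on by `σ` and `τ`
converge absolutely to continuous operators (`synth_memLamL`), and each `R τ ∘ S σ` is bounded.
So the Cantor space of pairs `(σ, τ)` is covered by the closed sets `F (a, m)` on which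
`‖R τ (S σ x)‖` is at most `m`, coordinatewise with weight `ρ a`, whenever `p a x ≤ 1`. By Baire,
some `F (a, m)` has interior, hence
contains all four settings of the `n`-th switches at some point, for all large `n`. The alternating
sum of these four values is the composition of the `n`-th terms, which therefore has norm at most
`4 m`; choosing `n ≥ 4 m` with `ν n = a` is a contradiction (`no_bad_sequence`).
-/

open scoped ENNReal BigOperators

/-- The `n`-th canonical unit sequence in `ℝ^ℕ`. -/
def eSeq (n : ℕ) : ℕ → ℝ := fun m => if m = n then 1 else 0

/-- Unconditional (finite-partial-sums) convergence of the series `∑ n, f n` to `y`,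
with respect to the norm `nn`. -/
def HasSumIn (nn : (ℕ → ℝ) → ℝ) (f : ℕ → ℕ → ℝ) (y : ℕ → ℝ) : Prop :=
  ∀ ε : ℝ, 0 < ε → ∃ F : Finset ℕ, ∀ G : Finset ℕ, F ⊆ G → nn ((∑ n ∈ G, f n) - y) < ε

/-- A Banach sequence space with a monotone norm in which the canonical system `(eSeq n)`
is an unconditional basis. -/
structure MonoBanachSeqSpace where
  mem : (ℕ → ℝ) → Prop
  nrm : (ℕ → ℝ) → ℝ
  mem_zero : mem 0
  mem_add : ∀ {x y}, mem x → mem y → mem (x + y)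
  mem_smul : ∀ (c : ℝ) {x}, mem x → mem (c • x)
  nrm_nonneg : ∀ x, mem x → 0 ≤ nrm x
  nrm_eq_zero_iff : ∀ {x}, mem x → (nrm x = 0 ↔ x = 0)
  nrm_add_le : ∀ {x y}, mem x → mem y → nrm (x + y) ≤ nrm x + nrm y
  nrm_smul : ∀ (c : ℝ) {x}, mem x → nrm (c • x) = |c| * nrm x
  complete : ∀ u : ℕ → ℕ → ℝ, (∀ n, mem (u n)) →
    (∀ ε : ℝ, 0 < ε → ∃ M, ∀ p q, M ≤ p → M ≤ q → nrm (u p - u q) < ε) →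
    ∃ x, mem x ∧ ∀ ε : ℝ, 0 < ε → ∃ M, ∀ p, M ≤ p → nrm (u p - x) < ε
  mem_e : ∀ n, mem (eSeq n)
  nrm_e : ∀ n, nrm (eSeq n) = 1
  mem_mul : ∀ (β : ℕ → ℝ) {x}, mem x → (∀ n, |β n| ≤ 1) → mem fun n => β n * x n
  expand : ∀ {x : ℕ → ℝ} (β : ℕ → ℝ), mem x → (∀ n, |β n| ≤ 1) →
    HasSumIn nrm (fun n => (β n * x n) • eSeq n) (fun n => β n * x n)
  mono : ∀ {x y}, mem x → mem y → (∀ n, |x n| ≤ |y n|) → nrm x ≤ nrm y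

/-- A Köthe matrix over a countable index set. -/
def IsKotheMatrix {ι : Type*} (a : ι → ℕ → ℝ) : Prop :=
  ∀ n k, 0 < a n k ∧ a n k ≤ a n (k + 1)

/-- Membership in the Köthe space `λ(a)`. -/
def memLam {ι : Type*} (a : ι → ℕ → ℝ) (x : ι → ℝ) : Prop :=
  ∀ k, Summable fun n => |x n| * a n k

/-- The `k`-th seminorm of the Köthe space `λ(a)`. -/
noncomputable def lamNorm {ι : Type*} (a : ι → ℕ → ℝ) (k : ℕ) (x : ι → ℝ) : ℝ :=
  ∑' n, |x n| * a n k

/-- Membership in the `ℓ`-Köthe space `λ^ℓ(b)`. -/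
def memLamL (l : MonoBanachSeqSpace) (b : ℕ → ℕ → ℝ) (x : ℕ → ℝ) : Prop :=
  ∀ k, l.mem fun n => x n * b n k

/-- The `k`-th seminorm of the `ℓ`-Köthe space `λ^ℓ(b)`. -/
noncomputable def lamLNorm (l : MonoBanachSeqSpace) (b : ℕ → ℕ → ℝ) (k : ℕ) (x : ℕ → ℝ) : ℝ :=
  l.nrm fun n => x n * b n k

/-- The operator seminorm `‖T‖_{pY,pX} = sup {pY (T x) : x ∈ memX, pX x ≤ 1}`,
with values in `ℝ≥0∞`. -/
noncomputable def opSeminorm {X Y : Type*} (memX : X → Prop) (pX : X → ℝ) (pY : Y → ℝ)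
    (T : X → Y) : ℝ≥0∞ :=
  ⨆ x : {x : X // memX x ∧ pX x ≤ 1}, ENNReal.ofReal (pY (T x.1))

/-- The dual seminorm `‖u‖*_k = sup {|u x| : p k x ≤ 1}` of a linear functional,
with values in `ℝ≥0∞`. -/
noncomputable def dualNorm {E : Type*} [AddCommGroup E] [Module ℝ E]
    (p : ℕ → Seminorm ℝ E) (k : ℕ) (u : E →ₗ[ℝ] ℝ) : ℝ≥0∞ :=
  ⨆ x : {x : E // p k x ≤ 1}, ENNReal.ofReal |u x.1|

/-- `max_{1 ≤ k ≤ k₀} f k` for a real-valued `f`. -/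
noncomputable def maxIcc (k₀ : ℕ) (h : 1 ≤ k₀) (f : ℕ → ℝ) : ℝ :=
  (Finset.Icc 1 k₀).sup' (Finset.nonempty_Icc.mpr h) f

/-! ### Monotone Banach sequence spaces and sums of unit vectors -/

lemma MonoBanachSeqSpace.abs_le_nrm (l : MonoBanachSeqSpace) {x : ℕ → ℝ} (hx : l.mem x) (j : ℕ) :
    |x j| ≤ l.nrm x := by
  have h1 : l.nrm (x j • eSeq j) = |x j| := by
    rw [l.nrm_smul _ (l.mem_e j), l.nrm_e, mul_one]
  rw [← h1]
  refine l.mono (l.mem_smul _ (l.mem_e j)) hx fun n => ?_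
  by_cases h : n = j
  · subst h; simp [eSeq]
  · simp [eSeq, h]

lemma MonoBanachSeqSpace.mem_sum (l : MonoBanachSeqSpace) (idx : ℕ → ℕ) (a : ℕ → ℝ)
    (s : Finset ℕ) : l.mem (∑ n ∈ s, a n • eSeq (idx n)) ∧
      l.nrm (∑ n ∈ s, a n • eSeq (idx n)) ≤ ∑ n ∈ s, |a n| := by
  classical
  induction s using Finset.induction_on with
  | empty => simpa using ⟨l.mem_zero, ((l.nrm_eq_zero_iff l.mem_zero).2 rfl).le⟩
  | insert n s hn ih =>
    rw [Finset.sum_insert hn, Finset.sum_insert hn]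
    have h1 := l.mem_smul (a n) (l.mem_e (idx n))
    refine ⟨l.mem_add h1 ih.1, (l.nrm_add_le h1 ih.1).trans ?_⟩
    rw [l.nrm_smul _ (l.mem_e _), l.nrm_e, mul_one]
    linarith [ih.2]

/-- The sequence `∑ n, a n • eSeq (idx n)`, summed coordinatewise; the map `idx` need not be
injective. -/
noncomputable def synth (idx : ℕ → ℕ) (a : ℕ → ℝ) : ℕ → ℝ :=
  fun j => ∑' n, a n * eSeq (idx n) j

lemma eSeq_nonneg (n j : ℕ) : 0 ≤ eSeq n j := by
  unfold eSeq; split_ifs <;> norm_num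

lemma eSeq_le_one (n j : ℕ) : eSeq n j ≤ 1 := by
  unfold eSeq; split_ifs <;> norm_num

lemma eSeq_mul_weight (g : ℕ → ℝ) (n j : ℕ) : eSeq n j * g j = eSeq n j * g n := by
  unfold eSeq; split_ifs with h
  · rw [h]
  · simp

/-- An absolutely convergent series of multiples of unit vectors converges in `ℓ`, because `ℓ` is
complete; the limit is identified coordinatewise. -/
lemma synth_mem (l : MonoBanachSeqSpace) (idx : ℕ → ℕ) (a : ℕ → ℝ)
    (ha : Summable fun n => |a n|) :
    l.mem (synth idx a) ∧ l.nrm (synth idx a) ≤ ∑' n, |a n| := by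
  set v : ℕ → ℕ → ℝ := fun m => ∑ n ∈ Finset.range m, a n • eSeq (idx n) with hv
  have hvm : ∀ m, l.mem (v m) := fun m => (l.mem_sum idx a _).1
  have hneg : ∀ {x y}, l.mem x → l.mem y → l.mem (x - y) := by
    intro x y hx hy
    have := l.mem_add hx (l.mem_smul (-1) hy)
    simpa [sub_eq_add_neg] using this
  have hsymm : ∀ {x y}, l.mem x → l.mem y → l.nrm (x - y) = l.nrm (y - x) := by
    intro x y hx hy
    have := l.nrm_smul (-1) (hneg hy hx)
    simpa using this
  have hcs : CauchySeq fun m => ∑ n ∈ Finset.range m, |a n| :=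
    ha.hasSum.tendsto_sum_nat.cauchySeq
  have hdiff : ∀ q p, q ≤ p →
      l.nrm (v p - v q) ≤ (∑ n ∈ Finset.range p, |a n|) - ∑ n ∈ Finset.range q, |a n| := by
    intro q p hqp
    simp only [hv]
    rw [← Finset.sum_Ico_eq_sub _ hqp, ← Finset.sum_Ico_eq_sub _ hqp]
    exact (l.mem_sum idx a _).2
  obtain ⟨x, hx, hlim⟩ := l.complete v hvm (by
    intro ε hε
    obtain ⟨M, hM⟩ := Metric.cauchySeq_iff.1 hcs ε hε
    refine ⟨M, fun p q hp hq => ?_⟩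
    rcases le_total q p with h | h
    · have h1 := hM p hp q hq
      rw [Real.dist_eq] at h1
      exact (hdiff q p h).trans_lt ((le_abs_self _).trans_lt h1)
    · have h1 := hM q hq p hp
      rw [Real.dist_eq] at h1
      rw [hsymm (hvm _) (hvm _)]
      exact (hdiff p q h).trans_lt ((le_abs_self _).trans_lt h1))
  have hxs : x = synth idx a := by
    funext j
    have hsum : Summable fun n => a n * eSeq (idx n) j := by
      refine Summable.of_norm_bounded ha fun n => ?_
      rw [Real.norm_eq_abs, abs_mul, abs_of_nonneg (eSeq_nonneg _ _)]
      exact mul_le_of_le_one_right (abs_nonneg _) (eSeq_le_one _ _)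
    refine tendsto_nhds_unique ?_ hsum.hasSum.tendsto_sum_nat
    rw [Metric.tendsto_atTop]
    intro ε hε
    obtain ⟨M, hM⟩ := hlim ε hε
    refine ⟨M, fun p hp => ?_⟩
    have h2 := l.abs_le_nrm (hneg (hvm p) hx) j
    rw [Real.dist_eq]
    have h3 : (v p - x) j = (∑ n ∈ Finset.range p, a n * eSeq (idx n) j) - x j := by
      simp [hv, Finset.sum_apply]
    rw [← h3]
    exact h2.trans_lt (hM p hp)
  rw [← hxs]
  refine ⟨hx, le_of_forall_pos_le_add fun ε hε => ?_⟩
  obtain ⟨M, hM⟩ := hlim ε hε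
  have h1 : l.nrm x ≤ l.nrm (v M) + l.nrm (x - v M) := by
    have := l.nrm_add_le (hvm M) (hneg hx (hvm M))
    simpa using this
  rw [hsymm hx (hvm M)] at h1
  have h2 := (l.mem_sum idx a (Finset.range M)).2
  have h3 := ha.sum_le_tsum (Finset.range M) (fun n _ => abs_nonneg _)
  have h4 := hM M le_rfl
  linarith

lemma synth_mul_weight (idx : ℕ → ℕ) (a g : ℕ → ℝ) :
    (fun j => synth idx a j * g j) = synth idx fun n => a n * g (idx n) := by
  funext j
  unfold synth
  rw [← tsum_mul_right]
  refine tsum_congr fun n => ?_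
  rw [mul_assoc, eSeq_mul_weight, mul_right_comm, mul_assoc]

lemma synth_memLamL (l : MonoBanachSeqSpace) {b : ℕ → ℕ → ℝ} (hb : ∀ n k, 0 < b n k)
    (idx : ℕ → ℕ) (a : ℕ → ℝ) (ha : ∀ k, Summable fun n => |a n| * b (idx n) k) :
    memLamL l b (synth idx a) ∧
      ∀ k, lamLNorm l b k (synth idx a) ≤ ∑' n, |a n| * b (idx n) k := by
  have key : ∀ k, (fun n => |a n * b (idx n) k|) = fun n => |a n| * b (idx n) k := by
    intro k; funext n; rw [abs_mul, abs_of_pos (hb _ _)]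
  have h : ∀ k, l.mem (fun j => synth idx a j * b j k) ∧
      l.nrm (fun j => synth idx a j * b j k) ≤ ∑' n, |a n| * b (idx n) k := by
    intro k
    rw [synth_mul_weight idx a (fun j => b j k), ← key k]
    exact synth_mem l idx _ (by rw [key k]; exact ha k)
  exact ⟨fun k => (h k).1, fun k => (h k).2⟩

lemma synth_summable {b : ℕ → ℕ → ℝ} (hb : ∀ n k, 0 < b n k) (idx : ℕ → ℕ) (a : ℕ → ℝ) (k : ℕ)
    (ha : Summable fun n => |a n| * b (idx n) k) (j : ℕ) :
    Summable fun n => a n * eSeq (idx n) j := by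
  refine Summable.of_norm_bounded (ha.mul_right (b j k)⁻¹) fun n => ?_
  have hj := hb j k
  rw [Real.norm_eq_abs, abs_mul, abs_of_nonneg (eSeq_nonneg _ _), ← div_eq_mul_inv, le_div_iff₀ hj,
    mul_assoc, eSeq_mul_weight (fun j => b j k)]
  exact mul_le_mul_of_nonneg_left (mul_le_of_le_one_left (hb _ _).le (eSeq_le_one _ _))
    (abs_nonneg _)

lemma lamLNorm_coord (l : MonoBanachSeqSpace) {b : ℕ → ℕ → ℝ} (hb : ∀ n k, 0 < b n k)
    {z : ℕ → ℝ} (hz : memLamL l b z) (j k : ℕ) : |z j| * b j k ≤ lamLNorm l b k z := by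
  have := l.abs_le_nrm (hz k) j
  rwa [abs_mul, abs_of_pos (hb _ _)] at this

/-! ### Operator and dual seminorms -/

lemma opSeminorm_lt_top {X Y : Type*} {memX : X → Prop} {pX : X → ℝ} {pY : Y → ℝ} {T : X → Y}
    (D : ℝ) (hD : 0 ≤ D) (h : ∀ x, memX x → pY (T x) ≤ D * pX x) :
    opSeminorm memX pX pY T < ⊤ := by
  refine lt_of_le_of_lt (iSup_le fun x => ?_) (ENNReal.ofReal_lt_top (r := D))
  exact ENNReal.ofReal_le_ofReal ((h x.1 x.2.1).trans (mul_le_of_le_one_right hD x.2.2))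

lemma exists_bound_of_opSeminorm_lt_top {X Y : Type*} {memX : X → Prop} {pX : X → ℝ} {pY : Y → ℝ}
    {T : X → Y} (h : opSeminorm memX pX pY T < ⊤) :
    ∃ m : ℕ, ∀ x, memX x → pX x ≤ 1 → pY (T x) ≤ m := by
  obtain ⟨m, hm⟩ := exists_nat_ge (opSeminorm memX pX pY T).toReal
  refine ⟨m, fun x hx hx1 => le_trans ?_ hm⟩
  rw [← ENNReal.ofReal_le_iff_le_toReal h.ne]
  exact le_iSup (fun x : {x : X // memX x ∧ pX x ≤ 1} => ENNReal.ofReal (pY (T x.1))) ⟨x, hx, hx1⟩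

lemma abs_le_dualNorm {E : Type*} [AddCommGroup E] [Module ℝ E]
    (p : ℕ → Seminorm ℝ E) (k : ℕ) (u : E →ₗ[ℝ] ℝ) (h : dualNorm p k u ≠ ⊤) (x : E) :
    |u x| ≤ (dualNorm p k u).toReal * p k x := by
  set D := (dualNorm p k u).toReal with hD
  have hD0 : 0 ≤ D := ENNReal.toReal_nonneg
  have h1 : ∀ y, p k y ≤ 1 → |u y| ≤ D := by
    intro y hy
    rw [hD, ← ENNReal.ofReal_le_iff_le_toReal h]
    exact le_iSup (fun x : {x : E // p k x ≤ 1} => ENNReal.ofReal |u x.1|) ⟨y, hy⟩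
  have h2 : ∀ δ : ℝ, 0 < δ → |u x| ≤ D * (p k x + δ) := by
    intro δ hδ
    have hpos : 0 < p k x + δ := by have := apply_nonneg (p k) x; linarith
    have h3 := h1 ((p k x + δ)⁻¹ • x) (by
      rw [map_smul_eq_mul, Real.norm_eq_abs, abs_of_pos (inv_pos.2 hpos), inv_mul_le_iff₀ hpos]
      linarith)
    rw [map_smul, smul_eq_mul, abs_mul, abs_of_pos (inv_pos.2 hpos), inv_mul_le_iff₀ hpos] at h3
    linarith [h3, mul_comm (p k x + δ) D]
  refine le_of_forall_pos_le_add fun ε hε => ?_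
  have h4 := h2 (ε / (D + 1)) (by positivity)
  have h5 : D * (ε / (D + 1)) ≤ ε := by
    rw [mul_div_assoc', div_le_iff₀ (by positivity)]
    nlinarith
  linarith [mul_add D (p k x) (ε / (D + 1))]

lemma dualNorm_anti {E : Type*} [AddCommGroup E] [Module ℝ E]
    (p : ℕ → Seminorm ℝ E) (hp : ∀ x, Monotone fun k => p k x) {m n : ℕ} (h : m ≤ n)
    (u : E →ₗ[ℝ] ℝ) : dualNorm p m u ≥ dualNorm p n u :=
  iSup_le fun x => le_iSup (fun x : {x : E // p m x ≤ 1} => ENNReal.ofReal |u x.1|)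
    ⟨x.1, (hp x.1 h).trans x.2⟩

/-! ### Normalised rank-one operators -/

/-- A failure of the inequality with constant `(n + 1) * 4 ^ n` yields, after rescaling, a
functional `f` and a scalar `t` such that `f ⊗ e_i` and `t e_i' ⊗ e_j` are `2⁻ⁿ`-small in the first
seminorms, while their composition `t f ⊗ e_j` exceeds `n`. -/
lemma normalise {E : Type*} [AddCommGroup E] [Module ℝ E]
    (p : ℕ → Seminorm ℝ E) {b c : ℕ → ℕ → ℝ} (hb : ∀ n k, 0 < b n k) (hc : ∀ n k, 0 < c n k)
    (N : ℕ → ℕ) (N₀ r K n i j : ℕ) (hK : 1 ≤ K) (u : E →ₗ[ℝ] ℝ)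
    (h : ENNReal.ofReal ((n + 1) * 4 ^ n) *
            ((Finset.Icc 1 K).sup fun k => dualNorm p (N k) u * ENNReal.ofReal (b i k)) *
            ((Finset.Icc 1 K).sup fun k => ENNReal.ofReal (c j k / b i (N k)))
          < ENNReal.ofReal (c j r) * dualNorm p N₀ u) :
    ∃ (f : E →ₗ[ℝ] ℝ) (t : ℝ), 0 < t ∧
      (∀ k ∈ Finset.Icc 1 K, ∀ x, |f x| * b i k ≤ (1 / 2) ^ n * p (N k) x) ∧
      (∀ k ∈ Finset.Icc 1 K, t * c j k ≤ (1 / 2) ^ n * b i (N k)) ∧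
      ∃ x, p N₀ x ≤ 1 ∧ (n : ℝ) < t * |f x| * c j r := by
  set A := (Finset.Icc 1 K).sup fun k => dualNorm p (N k) u * ENNReal.ofReal (b i k) with hA
  set B := (Finset.Icc 1 K).sup fun k => ENNReal.ofReal (c j k / b i (N k)) with hB
  have hAk : ∀ k ∈ Finset.Icc 1 K, dualNorm p (N k) u * ENNReal.ofReal (b i k) ≤ A :=
    fun k hk => Finset.le_sup (f := fun k => dualNorm p (N k) u * ENNReal.ofReal (b i k)) hk
  have hBk : ∀ k ∈ Finset.Icc 1 K, ENNReal.ofReal (c j k / b i (N k)) ≤ B :=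
    fun k hk => Finset.le_sup (f := fun k => ENNReal.ofReal (c j k / b i (N k))) hk
  have h1K : 1 ∈ Finset.Icc 1 K := by simp [hK]
  have hC : (0 : ℝ) < (n + 1) * 4 ^ n := by positivity
  have hB0 : B ≠ 0 := by
    have : 0 < ENNReal.ofReal (c j 1 / b i (N 1)) :=
      ENNReal.ofReal_pos.2 (div_pos (hc _ _) (hb _ _))
    exact (this.trans_le (hBk 1 h1K)).ne'
  have hBt : B ≠ ⊤ := by
    rw [hB]
    exact ((Finset.sup_lt_iff (by simp)).2 fun k _ => ENNReal.ofReal_lt_top).ne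
  have hAt : A ≠ ⊤ := by
    intro hAt
    rw [hAt, ENNReal.mul_top (ENNReal.ofReal_pos.2 hC).ne', ENNReal.top_mul hB0] at h
    exact not_top_lt h
  have hBr : 0 < B.toReal := ENNReal.toReal_pos hB0 hBt
  -- a point `x` nearly attaining the supremum in `‖u‖*_{N₀}`
  unfold dualNorm at h
  rw [ENNReal.mul_iSup, lt_iSup_iff] at h
  obtain ⟨⟨x, hx⟩, h⟩ := h
  have hreal : (n + 1) * 4 ^ n * A.toReal * B.toReal < c j r * |u x| := by
    rw [← ENNReal.ofReal_toReal hAt, ← ENNReal.ofReal_toReal hBt, ← ENNReal.ofReal_mul hC.le,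
      ← ENNReal.ofReal_mul (by positivity), ← ENNReal.ofReal_mul (hc _ _).le] at h
    exact (ENNReal.ofReal_lt_ofReal_iff_of_nonneg (by positivity)).1 h
  have hu : ∀ k ∈ Finset.Icc 1 K, ∀ y, |u y| * b i k ≤ A.toReal * p (N k) y := by
    intro k hk y
    have hbk := hb i k
    have hdt : dualNorm p (N k) u ≠ ⊤ := by
      intro hd
      have := hAk k hk
      rw [hd, ENNReal.top_mul (ENNReal.ofReal_pos.2 hbk).ne'] at this
      exact hAt (top_le_iff.1 this)
    have h1 := abs_le_dualNorm p (N k) u hdt y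
    have h2 : (dualNorm p (N k) u).toReal * b i k ≤ A.toReal := by
      have := ENNReal.toReal_mono hAt (hAk k hk)
      rwa [ENNReal.toReal_mul, ENNReal.toReal_ofReal hbk.le] at this
    calc |u y| * b i k ≤ (dualNorm p (N k) u).toReal * p (N k) y * b i k := by gcongr
      _ = (dualNorm p (N k) u).toReal * b i k * p (N k) y := by ring
      _ ≤ _ := mul_le_mul_of_nonneg_right h2 (apply_nonneg _ _)
  have hAr : 0 < A.toReal := by
    refine lt_of_le_of_ne ENNReal.toReal_nonneg fun h0 => ?_
    have h1 := hu 1 h1K x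
    rw [← h0, zero_mul] at h1
    rw [← h0, mul_zero, zero_mul] at hreal
    have h2 : 0 < |u x| := pos_of_mul_pos_right hreal (hc j r).le
    have := mul_pos h2 (hb i 1)
    linarith
  refine ⟨((1 / 2) ^ n / A.toReal) • u, (1 / 2) ^ n / B.toReal, by positivity, ?_, ?_, x, hx, ?_⟩
  · intro k hk y
    rw [LinearMap.smul_apply, smul_eq_mul, abs_mul, abs_of_pos (by positivity), mul_assoc,
      div_mul_eq_mul_div, div_le_iff₀ hAr]
    calc (1 / 2) ^ n * (|u y| * b i k) ≤ (1 / 2) ^ n * (A.toReal * p (N k) y) :=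
          mul_le_mul_of_nonneg_left (hu k hk y) (by positivity)
      _ = _ := by ring
  · intro k hk
    have h1 : c j k / b i (N k) ≤ B.toReal := (ENNReal.ofReal_le_iff_le_toReal hBt).1 (hBk k hk)
    rw [div_le_iff₀ (hb _ _)] at h1
    rw [div_mul_eq_mul_div, div_le_iff₀ hBr]
    calc (1 / 2) ^ n * c j k ≤ (1 / 2) ^ n * (B.toReal * b i (N k)) := by gcongr
      _ = _ := by ring
  · rw [LinearMap.smul_apply, smul_eq_mul, abs_mul, abs_of_pos (by positivity)]
    have h4 : ((1 : ℝ) / 2) ^ n * (1 / 2) ^ n * 4 ^ n = 1 := by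
      rw [← mul_pow, ← mul_pow]; norm_num
    have h5 : (1 / 2) ^ n / B.toReal * ((1 / 2) ^ n / A.toReal * |u x|) * c j r
        = ((1 / 2) ^ n * (1 / 2) ^ n) * (c j r * |u x|) / (A.toReal * B.toReal) := by
      field_simp
    rw [h5, lt_div_iff₀ (by positivity)]
    calc (n : ℝ) * (A.toReal * B.toReal) ≤ (n + 1) * (A.toReal * B.toReal) := by
          gcongr; linarith
      _ = ((1 / 2) ^ n * (1 / 2) ^ n) * ((n + 1) * 4 ^ n * A.toReal * B.toReal) := by
          linear_combination (-(n + 1) * (A.toReal * B.toReal)) * h4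
      _ < _ := by gcongr

/-! ### The family of operators indexed by the Cantor space -/

/-- The switch `true ↦ 1`, `false ↦ 0`. -/
def bv (s : Bool) : ℝ := if s then 1 else 0

lemma abs_bv_le (s : Bool) : |bv s| ≤ 1 := by cases s <;> simp [bv]

lemma synth_add {idx : ℕ → ℕ} {a a' : ℕ → ℝ} (h : ∀ j, Summable fun n => a n * eSeq (idx n) j)
    (h' : ∀ j, Summable fun n => a' n * eSeq (idx n) j) :
    synth idx (fun n => a n + a' n) = synth idx a + synth idx a' := by
  funext j
  simp only [synth, Pi.add_apply, add_mul]
  exact (h j).tsum_add (h' j)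

lemma synth_smul (idx : ℕ → ℕ) (a : ℕ → ℝ) (t : ℝ) :
    synth idx (fun n => t * a n) = t • synth idx a := by
  funext j
  simp only [synth, Pi.smul_apply, smul_eq_mul, mul_assoc]
  exact tsum_mul_left

/-- Toggling the switch at `n` changes the sum by exactly its `n`-th term. -/
lemma synth_update {idx : ℕ → ℕ} {a : ℕ → ℝ} (σ : ℕ → Bool) (n : ℕ)
    (h : ∀ (σ : ℕ → Bool) (j : ℕ), Summable fun n => (bv (σ n) * a n) * eSeq (idx n) j) :
    synth idx (fun m => bv (Function.update σ n true m) * a m) =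
      synth idx (fun m => bv (Function.update σ n false m) * a m) + a n • eSeq (idx n) := by
  funext j
  simp only [synth, Pi.add_apply, Pi.smul_apply, smul_eq_mul]
  rw [← sub_eq_iff_eq_add', ← (h _ j).tsum_sub (h _ j), tsum_eq_single n]
  · simp [bv]
  · intro m hm
    simp [Function.update_of_ne hm]

lemma tendsto_update_nhds (σ : ℕ → Bool) (s : Bool) :
    Filter.Tendsto (fun n => Function.update σ n s) Filter.atTop (nhds σ) := by
  rw [tendsto_pi_nhds]
  intro m
  refine tendsto_const_nhds.congr' ?_
  filter_upwards [Filter.eventually_gt_atTop m] with n hn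
  rw [Function.update_of_ne hn.ne]

/-- The gliding-hump core: a sequence of small rank-one operators `f n ⊗ e_{I n}` and
`t n e_{I n}' ⊗ e_{J n}` whose compositions are large contradicts boundedness of all factorized
operators. -/
lemma no_bad_sequence
    {E : Type*} [AddCommGroup E] [Module ℝ E]
    (p : ℕ → Seminorm ℝ E)
    (b c : ℕ → ℕ → ℝ) (hb : ∀ n k, 0 < b n k) (hc : ∀ n k, 0 < c n k)
    (l lt : MonoBanachSeqSpace)
    (hBF : ∀ (S : E →ₗ[ℝ] (ℕ → ℝ)) (R : (ℕ → ℝ) → (ℕ → ℝ)),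
        (∀ x, memLamL l b (S x)) →
        (∀ z, memLamL l b z → memLamL lt c (R z)) →
        (∀ z w, memLamL l b z → memLamL l b w → R (z + w) = R z + R w) →
        (∀ (t : ℝ) (z), memLamL l b z → R (t • z) = t • R z) →
        (∀ k, ∃ m, opSeminorm (fun _ : E => True) (fun x => p m x) (lamLNorm l b k) S < ⊤) →
        (∀ k, ∃ m, opSeminorm (memLamL l b) (lamLNorm l b m) (lamLNorm lt c k) R < ⊤) →
        ∃ N, ∀ r, opSeminorm (fun _ : E => True) (fun x => p N x) (lamLNorm lt c r)
          (fun x => R (S x)) < ⊤)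
    (N' ν ρ I J : ℕ → ℕ) (hν : ∀ a, ∃ᶠ n in Filter.atTop, ν n = a)
    (f : ℕ → E →ₗ[ℝ] ℝ) (t : ℕ → ℝ) (ht : ∀ n, 0 < t n)
    (w v : ℕ → ℕ → ℝ) (hw : ∀ k, Summable (w k)) (hv : ∀ k, Summable (v k))
    (hf : ∀ k n x, |f n x| * b (I n) k ≤ w k n * p (N' k) x)
    (htv : ∀ k n, t n * c (J n) k ≤ v k n * b (I n) (N' k))
    (hw0 : ∀ k n, 0 ≤ w k n)
    (hbig : ∀ n, ∃ x, p (ν n) x ≤ 1 ∧ (n : ℝ) < t n * |f n x| * c (J n) (ρ (ν n))) : False := by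
  have hv0 : ∀ k n, 0 ≤ v k n := fun k n =>
    (pos_of_mul_pos_left ((mul_pos (ht n) (hc _ _)).trans_le (htv k n)) (hb _ _).le).le
  -- absolute convergence of the series defining `S`
  have hSb : ∀ (σ : ℕ → Bool) k x n,
      |bv (σ n) * f n x| * b (I n) k ≤ w k n * p (N' k) x := by
    intro σ k x n
    refine le_trans ?_ (hf k n x)
    rw [abs_mul]
    exact mul_le_mul_of_nonneg_right
      (mul_le_of_le_one_left (abs_nonneg _) (abs_bv_le _)) (hb _ _).le
  have hSs : ∀ (σ : ℕ → Bool) x k, Summable fun n => |bv (σ n) * f n x| * b (I n) k :=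
    fun σ x k => Summable.of_nonneg_of_le (fun n => mul_nonneg (abs_nonneg _) (hb _ _).le)
      (hSb σ k x) ((hw k).mul_right _)
  have hSc : ∀ (σ : ℕ → Bool) x j,
      Summable fun n => (bv (σ n) * f n x) * eSeq (I n) j :=
    fun σ x j => synth_summable hb I _ 0 (hSs σ x 0) j
  let S : (ℕ → Bool) → E →ₗ[ℝ] (ℕ → ℝ) := fun σ =>
    { toFun := fun x => synth I fun n => bv (σ n) * f n x
      map_add' := fun x y => by
        rw [← synth_add (hSc σ x) (hSc σ y)]
        simp only [map_add, mul_add]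
      map_smul' := fun a x => by
        rw [RingHom.id_apply, ← synth_smul]
        simp only [map_smul, smul_eq_mul, mul_left_comm] }
  have hSdef : ∀ σ x, S σ x = synth I fun n => bv (σ n) * f n x := fun _ _ => rfl
  have hSmem : ∀ σ x, memLamL l b (S σ x) := fun σ x => (synth_memLamL l hb I _ (hSs σ x)).1
  have hSnorm : ∀ σ x k, lamLNorm l b k (S σ x) ≤ (∑' n, w k n) * p (N' k) x := by
    intro σ x k
    refine ((synth_memLamL l hb I _ (hSs σ x)).2 k).trans ?_
    rw [← tsum_mul_right]
    exact (hSs σ x k).tsum_le_tsum (hSb σ k x) ((hw k).mul_right _)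
  -- absolute convergence of the series defining `R`
  have hRb : ∀ (τ : ℕ → Bool) k z, memLamL l b z → ∀ n,
      |bv (τ n) * (t n * z (I n))| * c (J n) k ≤ v k n * lamLNorm l b (N' k) z := by
    intro τ k z hz n
    have h1 := lamLNorm_coord l hb hz (I n) (N' k)
    have h2 := htv k n
    calc |bv (τ n) * (t n * z (I n))| * c (J n) k
        ≤ (t n * |z (I n)|) * c (J n) k := by
          refine mul_le_mul_of_nonneg_right ?_ (hc _ _).le
          rw [abs_mul, abs_mul, abs_of_pos (ht n)]
          exact mul_le_of_le_one_left (mul_nonneg (ht n).le (abs_nonneg _)) (abs_bv_le _)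
      _ = (t n * c (J n) k) * |z (I n)| := by ring
      _ ≤ (v k n * b (I n) (N' k)) * |z (I n)| := by gcongr
      _ = v k n * (|z (I n)| * b (I n) (N' k)) := by ring
      _ ≤ _ := mul_le_mul_of_nonneg_left h1 (hv0 k n)
  have hRs : ∀ (τ : ℕ → Bool) z, memLamL l b z → ∀ k,
      Summable fun n => |bv (τ n) * (t n * z (I n))| * c (J n) k :=
    fun τ z hz k => Summable.of_nonneg_of_le (fun n => mul_nonneg (abs_nonneg _) (hc _ _).le)
      (hRb τ k z hz) ((hv k).mul_right _)
  have hRc : ∀ (τ : ℕ → Bool) z, memLamL l b z → ∀ j,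
      Summable fun n => (bv (τ n) * (t n * z (I n))) * eSeq (J n) j :=
    fun τ z hz j => synth_summable hc J _ 0 (hRs τ z hz 0) j
  let R : (ℕ → Bool) → (ℕ → ℝ) → (ℕ → ℝ) := fun τ z =>
    synth J fun n => bv (τ n) * (t n * z (I n))
  have hRdef : ∀ τ z, R τ z = synth J fun n => bv (τ n) * (t n * z (I n)) := fun _ _ => rfl
  have hRmem : ∀ τ z, memLamL l b z → memLamL lt c (R τ z) :=
    fun τ z hz => (synth_memLamL lt hc J _ (hRs τ z hz)).1
  have hRadd : ∀ τ z w, memLamL l b z → memLamL l b w → R τ (z + w) = R τ z + R τ w := by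
    intro τ z w hz hw
    rw [hRdef, hRdef, hRdef, ← synth_add (hRc τ z hz) (hRc τ w hw)]
    simp only [Pi.add_apply, mul_add]
  have hRsmul : ∀ τ (a : ℝ) z, memLamL l b z → R τ (a • z) = a • R τ z := by
    intro τ a z _
    rw [hRdef, hRdef, ← synth_smul]
    simp only [Pi.smul_apply, smul_eq_mul, mul_left_comm]
  have hRnorm : ∀ τ z, memLamL l b z → ∀ k,
      lamLNorm lt c k (R τ z) ≤ (∑' n, v k n) * lamLNorm l b (N' k) z := by
    intro τ z hz k
    refine ((synth_memLamL lt hc J _ (hRs τ z hz)).2 k).trans ?_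
    rw [← tsum_mul_right]
    exact (hRs τ z hz k).tsum_le_tsum (hRb τ k z hz) ((hv k).mul_right _)
  -- closed sets of parameters covering the compact space of all pairs `(σ, τ)`
  let F : ℕ × ℕ → Set ((ℕ → Bool) × (ℕ → Bool)) := fun q =>
    {s | ∀ x, p q.1 x ≤ 1 → ∀ j, |R s.2 (S s.1 x) j| * c j (ρ q.1) ≤ q.2}
  have hbvc : Continuous bv := continuous_of_discreteTopology
  have hScont : ∀ x j, Continuous fun σ : ℕ → Bool => S σ x j := by
    intro x j
    have hsum : Summable fun n => |f n x * eSeq (I n) j| := by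
      have h1 := (hSc (fun _ => true) x j).abs
      simpa [bv] using h1
    refine continuous_tsum (u := fun n => |f n x * eSeq (I n) j|) (fun n => ?_) hsum ?_
    · exact ((hbvc.comp (continuous_apply n)).mul continuous_const).mul continuous_const
    · intro n σ
      rw [Real.norm_eq_abs, mul_assoc, abs_mul]
      exact mul_le_of_le_one_left (abs_nonneg _) (abs_bv_le _)
  have hRScont : ∀ x j,
      Continuous fun s : (ℕ → Bool) × (ℕ → Bool) => R s.2 (S s.1 x) j := by
    intro x j
    set M := (∑' n, w (N' 0) n) * p (N' (N' 0)) x with hM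
    refine continuous_tsum (u := fun n => v 0 n * M / c j 0) (fun n => ?_)
      (((hv 0).mul_right M).div_const _) ?_
    · exact ((hbvc.comp ((continuous_apply n).comp continuous_snd)).mul
        (continuous_const.mul ((hScont x (I n)).comp continuous_fst))).mul continuous_const
    · intro n s
      have hj := hc j 0
      rw [Real.norm_eq_abs, abs_mul, abs_of_nonneg (eSeq_nonneg _ _), le_div_iff₀ hj, mul_assoc,
        eSeq_mul_weight (fun j => c j 0)]
      refine le_trans (mul_le_mul_of_nonneg_left
        (mul_le_of_le_one_left (hc _ _).le (eSeq_le_one _ _)) (abs_nonneg _)) ?_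
      exact (hRb s.2 0 _ (hSmem s.1 x) n).trans
        (mul_le_mul_of_nonneg_left (hSnorm s.1 x (N' 0)) (hv0 0 n))
  have hFclosed : ∀ q, IsClosed (F q) := by
    intro q
    simp only [F, Set.ofPred_forall]
    refine isClosed_iInter fun x => isClosed_iInter fun _ => isClosed_iInter fun j => ?_
    exact isClosed_le ((hRScont x j).abs.mul continuous_const) continuous_const
  have hFcover : ⋃ q, F q = Set.univ := by
    refine Set.eq_univ_of_forall fun s => ?_
    obtain ⟨a, ha⟩ := hBF (S s.1) (R s.2) (hSmem s.1) (hRmem s.2) (hRadd s.2) (hRsmul s.2)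
      (fun k => ⟨N' k, opSeminorm_lt_top _ (tsum_nonneg (hw0 k)) fun x _ => hSnorm s.1 x k⟩)
      (fun k => ⟨N' k, opSeminorm_lt_top _ (tsum_nonneg (hv0 k)) fun z hz => hRnorm s.2 z hz k⟩)
    obtain ⟨m, hm⟩ := exists_bound_of_opSeminorm_lt_top (ha (ρ a))
    refine Set.mem_iUnion.2 ⟨(a, m), fun x hx j => ?_⟩
    exact (lamLNorm_coord lt hc (hRmem s.2 _ (hSmem s.1 x)) j (ρ a)).trans (hm x trivial hx)
  obtain ⟨⟨a, m⟩, ⟨σ, τ⟩, hint⟩ := nonempty_interior_of_iUnion_of_closed hFclosed hFcover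
  have hnhds : F (a, m) ∈ nhds (σ, τ) := mem_interior_iff_mem_nhds.1 hint
  have hev : ∀ s s' : Bool, ∀ᶠ n in Filter.atTop,
      (Function.update σ n s, Function.update τ n s') ∈ F (a, m) := fun s s' =>
    ((tendsto_update_nhds σ s).prodMk_nhds (tendsto_update_nhds τ s')) hnhds
  obtain ⟨n, hna, htt, htf, hft, hff, hn⟩ := ((hν a).and_eventually
    ((hev true true).and ((hev true false).and ((hev false true).and ((hev false false).and
      (Filter.eventually_ge_atTop (4 * m))))))).exists
  obtain ⟨x, hx, hlarge⟩ := hbig n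
  rw [hna] at hx hlarge
  have h1 := htt x hx (J n)
  have h2 := htf x hx (J n)
  have h3 := hft x hx (J n)
  have h4 := hff x hx (J n)
  -- the second difference of `(σ, τ) ↦ R τ (S σ x)` in the `n`-th switches is one rank-one term
  have hSx : S (Function.update σ n true) x - S (Function.update σ n false) x
      = f n x • eSeq (I n) := by
    rw [hSdef, hSdef, synth_update σ n (fun σ j => hSc σ x j), add_sub_cancel_left]
  have hRz : ∀ z, memLamL l b z → R (Function.update τ n true) z
      = R (Function.update τ n false) z + (t n * z (I n)) • eSeq (J n) := by
    intro z hz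
    rw [hRdef, hRdef]
    exact synth_update τ n (fun τ j => hRc τ z hz j)
  have e1 := congrFun (hRz _ (hSmem (Function.update σ n true) x)) (J n)
  have e2 := congrFun (hRz _ (hSmem (Function.update σ n false) x)) (J n)
  have e3 := congrFun hSx (I n)
  simp only [Pi.add_apply, Pi.sub_apply, Pi.smul_apply, smul_eq_mul, eSeq, if_true, mul_one]
    at e1 e2 e3
  simp only at h1 h2 h3 h4
  have hcpos := hc (J n) (ρ a)
  have hfin : t n * f n x =
      R (Function.update τ n true) (S (Function.update σ n true) x) (J n)
      - R (Function.update τ n false) (S (Function.update σ n true) x) (J n)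
      - R (Function.update τ n true) (S (Function.update σ n false) x) (J n)
      + R (Function.update τ n false) (S (Function.update σ n false) x) (J n) := by
    rw [e1, e2, ← e3]; ring
  have habs : t n * |f n x| ≤
      |R (Function.update τ n true) (S (Function.update σ n true) x) (J n)|
      + |R (Function.update τ n false) (S (Function.update σ n true) x) (J n)|
      + |R (Function.update τ n true) (S (Function.update σ n false) x) (J n)|
      + |R (Function.update τ n false) (S (Function.update σ n false) x) (J n)| := by
    have hmul : t n * |f n x| = |t n * f n x| := by rw [abs_mul, abs_of_pos (ht n)]
    rw [hmul, hfin]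
    refine (abs_add_le _ _).trans (add_le_add ?_ le_rfl)
    refine (abs_sub _ _).trans (add_le_add ?_ le_rfl)
    exact abs_sub _ _
  have hn' : (4 * m : ℝ) ≤ n := by exact_mod_cast hn
  have := mul_le_mul_of_nonneg_right habs hcpos.le
  simp only [add_mul] at this
  linarith

/-- The theorem for nondecreasing `N`, in which case `‖u‖*_{N 1} < ∞` makes all the `‖u‖*_{N k}`
with `k ≥ 1` finite. -/
lemma necessary_of_monotone
    {E : Type*} [AddCommGroup E] [Module ℝ E]
    (p : ℕ → Seminorm ℝ E) (hp : ∀ x, Monotone fun k => p k x)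
    (b c : ℕ → ℕ → ℝ) (hb : IsKotheMatrix b) (hc : IsKotheMatrix c)
    (l lt : MonoBanachSeqSpace)
    (hBF : ∀ (S : E →ₗ[ℝ] (ℕ → ℝ)) (R : (ℕ → ℝ) → (ℕ → ℝ)),
        (∀ x, memLamL l b (S x)) →
        (∀ z, memLamL l b z → memLamL lt c (R z)) →
        (∀ z w, memLamL l b z → memLamL l b w → R (z + w) = R z + R w) →
        (∀ (t : ℝ) (z), memLamL l b z → R (t • z) = t • R z) →
        (∀ k, ∃ m, opSeminorm (fun _ : E => True) (fun x => p m x) (lamLNorm l b k) S < ⊤) →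
        (∀ k, ∃ m, opSeminorm (memLamL l b) (lamLNorm l b m) (lamLNorm lt c k) R < ⊤) →
        ∃ N, ∀ r, opSeminorm (fun _ : E => True) (fun x => p N x) (lamLNorm lt c r)
          (fun x => R (S x)) < ⊤)
    (N : ℕ → ℕ) (hN : Monotone N) : ∃ N₀ : ℕ, ∀ r : ℕ, ∃ k₀ : ℕ, 1 ≤ k₀ ∧ ∃ C₀ : ℝ, 0 < C₀ ∧
      ∀ (i j : ℕ) (u : E →ₗ[ℝ] ℝ),
        ENNReal.ofReal (c j r) * dualNorm p N₀ u ≤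
          ENNReal.ofReal C₀ *
            ((Finset.Icc 1 k₀).sup fun k => dualNorm p (N k) u * ENNReal.ofReal (b i k)) *
            ((Finset.Icc 1 k₀).sup fun k => ENNReal.ofReal (c j k / b i (N k))) := by
  by_contra hcon
  push Not at hcon
  choose ρ hρ using hcon
  have hb' : ∀ n k, 0 < b n k := fun n k => (hb n k).1
  have hc' : ∀ n k, 0 < c n k := fun n k => (hc n k).1
  let ν : ℕ → ℕ := fun n => (Nat.unpair n).1
  have hν : ∀ a, ∃ᶠ n in Filter.atTop, ν n = a := by
    intro a
    rw [Filter.frequently_atTop]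
    exact fun k => ⟨Nat.pair a k, Nat.right_le_pair a k, by simp [ν]⟩
  have hdata : ∀ n : ℕ, ∃ (i j : ℕ) (f : E →ₗ[ℝ] ℝ) (t : ℝ), 0 < t ∧
      (∀ k ∈ Finset.Icc 1 (n + 1), ∀ x, |f x| * b i k ≤ (1 / 2) ^ n * p (N k) x) ∧
      (∀ k ∈ Finset.Icc 1 (n + 1), t * c j k ≤ (1 / 2) ^ n * b i (N k)) ∧
      ∃ x, p (ν n) x ≤ 1 ∧ (n : ℝ) < t * |f x| * c j (ρ (ν n)) := by
    intro n
    obtain ⟨i, j, u, hu⟩ := hρ (ν n) (n + 1) (by omega) ((n + 1) * 4 ^ n) (by positivity)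
    exact ⟨i, j, normalise p hb' hc' N (ν n) (ρ (ν n)) (n + 1) n i j (by omega) u hu⟩
  choose I J f t ht hf htc hbig using hdata
  have hgeo : Summable fun n : ℕ => ((1 : ℝ) / 2) ^ n := summable_geometric_two
  -- seminorm index `k` is handled through `k + 1 ≥ 1`; the first `k` terms need separate constants
  refine no_bad_sequence p b c hb' hc' l lt hBF (fun k => N (k + 1)) ν ρ I J hν f t ht
    (fun k n => if n < k then (1 / 2) ^ n * b (I n) k / b (I n) 1 else (1 / 2) ^ n)
    (fun k n => t n * c (J n) k / b (I n) (N (k + 1))) ?_ ?_ ?_ ?_ ?_ hbig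
  · intro k
    refine hgeo.congr_atTop ?_
    filter_upwards [Filter.eventually_ge_atTop k] with n hn
    rw [if_neg (by omega)]
  · intro k
    refine Summable.of_norm_bounded_eventually_nat hgeo ?_
    filter_upwards [Filter.eventually_ge_atTop k] with n hn
    have h1 := htc n (k + 1) (Finset.mem_Icc.2 ⟨by omega, by omega⟩)
    have hpos := hb' (I n) (N (k + 1))
    have h2 : 0 ≤ t n * c (J n) k / b (I n) (N (k + 1)) :=
      div_nonneg (mul_pos (ht n) (hc' _ _)).le hpos.le
    rw [Real.norm_of_nonneg h2, div_le_iff₀ hpos]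
    exact (mul_le_mul_of_nonneg_left (hc _ _).2 (ht n).le).trans h1
  · intro k n x
    split_ifs with h
    · have h1 := hf n 1 (Finset.mem_Icc.2 ⟨le_rfl, by omega⟩) x
      have h2 : p (N 1) x ≤ p (N (k + 1)) x := hp x (hN (by omega))
      have hb1 := hb' (I n) 1
      have hbk := hb' (I n) k
      calc |f n x| * b (I n) k = (|f n x| * b (I n) 1) * (b (I n) k / b (I n) 1) := by
            field_simp
        _ ≤ ((1 / 2) ^ n * p (N (k + 1)) x) * (b (I n) k / b (I n) 1) := by
            refine mul_le_mul_of_nonneg_right (h1.trans ?_) (by positivity)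
            gcongr
        _ = _ := by ring
    · exact (mul_le_mul_of_nonneg_left (hb _ _).2 (abs_nonneg _)).trans
        (hf n (k + 1) (Finset.mem_Icc.2 ⟨by omega, by omega⟩) x)
  · intro k n
    rw [div_mul_cancel₀ _ (hb' _ _).ne']
  · intro k n
    have hb1 := hb' (I n) 1
    have hbk := hb' (I n) k
    split_ifs <;> positivity

/-- necessity in Theorem 4, without nuclearity. If
`(E, λ^ℓ(B), λ^ℓ̃(C)) ∈ 𝓑𝓕` then for every sequence `N(k)` there is `N₀` such that for each
`r` there are `k₀` and `C₀ > 0` with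
`c_j^r ‖u‖*_{N₀} ≤ C₀ · (max_{1≤k≤k₀} ‖u‖*_{N(k)} b_i^k) · (max_{1≤k≤k₀} c_j^k / b_i^{N(k)})`
for all `i`, `j` and all `u ∈ E′`. -/
theorem BF_frechet_lambdaL_necessary
    {E : Type*} [AddCommGroup E] [Module ℝ E]
    (p : ℕ → Seminorm ℝ E)
    (hpmono : ∀ k x, p k x ≤ p (k + 1) x)
    (hHaus : ∀ x : E, (∀ k, p k x = 0) → x = 0)
    (hComplete : ∀ u : ℕ → E,
      (∀ k, ∀ ε : ℝ, 0 < ε → ∃ M, ∀ i j, M ≤ i → M ≤ j → p k (u i - u j) < ε) →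
      ∃ x : E, ∀ k, ∀ ε : ℝ, 0 < ε → ∃ M, ∀ i, M ≤ i → p k (u i - x) < ε)
    (b c : ℕ → ℕ → ℝ) (hb : IsKotheMatrix b) (hc : IsKotheMatrix c)
    (l lt : MonoBanachSeqSpace)
    (hBF : ∀ (S : E →ₗ[ℝ] (ℕ → ℝ)) (R : (ℕ → ℝ) → (ℕ → ℝ)),
        (∀ x, memLamL l b (S x)) →
        (∀ z, memLamL l b z → memLamL lt c (R z)) →
        (∀ z w, memLamL l b z → memLamL l b w → R (z + w) = R z + R w) →
        (∀ (t : ℝ) (z), memLamL l b z → R (t • z) = t • R z) →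
        (∀ k, ∃ m, opSeminorm (fun _ : E => True) (fun x => p m x) (lamLNorm l b k) S < ⊤) →
        (∀ k, ∃ m, opSeminorm (memLamL l b) (lamLNorm l b m) (lamLNorm lt c k) R < ⊤) →
        ∃ N, ∀ r, opSeminorm (fun _ : E => True) (fun x => p N x) (lamLNorm lt c r)
          (fun x => R (S x)) < ⊤) :
    ∀ N : ℕ → ℕ, ∃ N₀ : ℕ, ∀ r : ℕ, ∃ k₀ : ℕ, 1 ≤ k₀ ∧ ∃ C₀ : ℝ, 0 < C₀ ∧
      ∀ (i j : ℕ) (u : E →ₗ[ℝ] ℝ), (∃ k, ∃ C' : ℝ, ∀ x, |u x| ≤ C' * p k x) →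
        ENNReal.ofReal (c j r) * dualNorm p N₀ u ≤
          ENNReal.ofReal C₀ *
            ((Finset.Icc 1 k₀).sup fun k => dualNorm p (N k) u * ENNReal.ofReal (b i k)) *
            ((Finset.Icc 1 k₀).sup fun k => ENNReal.ofReal (c j k / b i (N k))) := by
  intro N
  have hp : ∀ x, Monotone fun k => p k x := fun x => monotone_nat_of_le_succ fun k => hpmono k x
  -- enlarging `N` shrinks the right-hand side, so `N` may be replaced by its running maximum
  obtain ⟨N₀, h⟩ := necessary_of_monotone p hp b c hb hc l lt hBF (partialSups N)
    (partialSups N).monotone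
  refine ⟨N₀, fun r => ?_⟩
  obtain ⟨k₀, hk₀, C₀, hC₀, h⟩ := h r
  refine ⟨k₀, hk₀, C₀, hC₀, fun i j u _ => (h i j u).trans ?_⟩
  have hbm : ∀ i, Monotone (b i) := fun i => monotone_nat_of_le_succ fun k => (hb i k).2
  refine mul_le_mul' (mul_le_mul' le_rfl ?_) ?_
  · refine Finset.sup_mono_fun fun k _ => ?_
    exact mul_le_mul' (dualNorm_anti p hp (le_partialSups N k) u) le_rfl
  · refine Finset.sup_mono_fun fun k _ => ENNReal.ofReal_le_ofReal ?_
    exact div_le_div_of_nonneg_left (hc j k).1.le (hb i _).1 (hbm i (le_partialSups N k))
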